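/- Let A ∈ V_{(0,b]}(X) with constant M_A. Then for every x ∈ X with ‖x‖ = 1, ‖f(A)x‖ ≤ (2·M_A + 1) · f′(−0) · ‖Ax‖, where f′(−0) := ∫₀^b (1/t) dτ(t). -/

import Mathlib

open MeasureTheory Set Filter

/-- A bounded operator `A` belongs to `V_{(0,b]}(X)` with constant `M` if every `t ∈ (0,b]`
lies in the resolvent set of `A` and `‖R(t,A)‖ ≤ M/t`. -/
def MemV {X : Type*} [NormedAddCommGroup X] [NormedSpace ℂ X]
    (b M : ℝ) (A : X →L[ℂ] X) : Prop :=
  ∀ t ∈ Ioc (0 : ℝ) b, (t : ℂ) ∈ resolventSet ℂ A ∧ ‖resolvent A (t : ℂ)‖ ≤ M / t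

/-- For `f ∈ ZR(0,b]` with representing measure `τ`, the operator
`f(A) = ∫₀^b A·R(t,A) dτ(t)` (a Bochner integral in operator norm). -/
noncomputable def fOp {X : Type*} [NormedAddCommGroup X] [NormedSpace ℂ X] [CompleteSpace X]
    (τ : Measure ℝ) (b : ℝ) (A : X →L[ℂ] X) : X →L[ℂ] X :=
  ∫ t in Ioc (0 : ℝ) b, A * resolvent A (t : ℂ) ∂τ

/-!
Since `A` commutes with its resolvents, `f(A) = (∫₀^b R(t,A) dτ(t)) A`, and `‖R(t,A)‖ ≤ M/t` bounds
the norm of the integral by `M · f′(−0)`. This gives the inequality with `M` in place of `2M + 1`.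
-/

theorem commute_ringInverse_right {M₀ : Type*} [MonoidWithZero M₀] {a b : M₀}
    (h : Commute a b) : Commute a (Ring.inverse b) := by
  by_cases hb : IsUnit b
  · obtain ⟨u, rfl⟩ := hb
    rw [Ring.inverse_unit]
    exact h.units_inv_right
  · rw [Ring.inverse_non_unit b hb]
    exact Commute.zero_right a

theorem commute_resolvent {R A : Type*} [CommSemiring R] [Ring A] [Algebra R A] (a : A) (r : R) :
    Commute a (resolvent a r) :=
  commute_ringInverse_right ((Algebra.commute_algebraMap_right r a).sub_right (Commute.refl a))

theorem continuousOn_resolvent {𝕜 A : Type*} [NontriviallyNormedField 𝕜] [NormedRing A]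
    [NormedAlgebra 𝕜 A] [CompleteSpace A] (a : A) :
    ContinuousOn (resolvent a) (resolventSet 𝕜 a) := fun _ hz =>
  (spectrum.hasDerivAt_resolvent_const_left hz).continuousAt.continuousWithinAt

namespace MemV

variable {X : Type*} [NormedAddCommGroup X] [NormedSpace ℂ X] {b M : ℝ} {A : X →L[ℂ] X}
  {τ : Measure ℝ}

theorem ae_norm_resolvent_le (hA : MemV b M A) :
    ∀ᵐ t : ℝ ∂τ.restrict (Ioc 0 b), ‖resolvent A (t : ℂ)‖ ≤ M * (1 / t) := by
  filter_upwards [ae_restrict_mem measurableSet_Ioc] with t ht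
  rw [mul_one_div]
  exact (hA t ht).2

theorem norm_integral_resolvent_le (hA : MemV b M A)
    (hτ : IntegrableOn (fun t : ℝ => 1 / t) (Ioc 0 b) τ) :
    ‖∫ t in Ioc (0 : ℝ) b, resolvent A (t : ℂ) ∂τ‖ ≤ M * ∫ t in Ioc (0 : ℝ) b, 1 / t ∂τ :=
  (norm_integral_le_of_norm_le (hτ.const_mul M) hA.ae_norm_resolvent_le).trans_eq
    (integral_const_mul M _)

variable [CompleteSpace X]

theorem continuousOn_resolvent_ofReal (hA : MemV b M A) :
    ContinuousOn (fun t : ℝ => resolvent A (t : ℂ)) (Ioc 0 b) :=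
  (continuousOn_resolvent A).comp Complex.continuous_ofReal.continuousOn fun t ht => (hA t ht).1

theorem integrableOn_resolvent (hA : MemV b M A)
    (hτ : IntegrableOn (fun t : ℝ => 1 / t) (Ioc 0 b) τ) :
    IntegrableOn (fun t : ℝ => resolvent A (t : ℂ)) (Ioc 0 b) τ :=
  (hτ.const_mul M).mono'
    (hA.continuousOn_resolvent_ofReal.aestronglyMeasurable measurableSet_Ioc)
    hA.ae_norm_resolvent_le

theorem fOp_eq_integral_resolvent_mul (hA : MemV b M A)
    (hτ : IntegrableOn (fun t : ℝ => 1 / t) (Ioc 0 b) τ) :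
    fOp τ b A = (∫ t in Ioc (0 : ℝ) b, resolvent A (t : ℂ) ∂τ) * A :=
  calc fOp τ b A = ∫ t in Ioc (0 : ℝ) b, resolvent A (t : ℂ) * A ∂τ :=
        integral_congr_ae (.of_forall fun t => commute_resolvent A (t : ℂ))
    _ = (∫ t in Ioc (0 : ℝ) b, resolvent A (t : ℂ) ∂τ) * A :=
        integral_mul_const_of_integrable (hA.integrableOn_resolvent hτ)

end MemV

theorem moment_inequality_linear_general {X : Type*} [NormedAddCommGroup X] [NormedSpace ℂ X]
    [CompleteSpace X] {b M : ℝ} {τ : Measure ℝ} {A : X →L[ℂ] X} (hA : MemV b M A)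
    (hτ : IntegrableOn (fun t : ℝ => 1 / t) (Ioc 0 b) τ) (x : X) :
    ‖fOp τ b A x‖ ≤ M * (∫ t in Ioc (0 : ℝ) b, 1 / t ∂τ) * ‖A x‖ := by
  rw [hA.fOp_eq_integral_resolvent_mul hτ]
  exact ContinuousLinearMap.le_of_opNorm_le _ (hA.norm_integral_resolvent_le hτ) (A x)

/-- Corollary 2: for `A ∈ V_{(0,b]}(X)` and a unit vector `x`,
`‖f(A)x‖ ≤ (2M_A + 1)·f′(−0)·‖Ax‖`, where `f′(−0) = ∫₀^b (1/t) dτ(t)`. -/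
theorem moment_inequality_linear {X : Type*} [NormedAddCommGroup X] [NormedSpace ℂ X]
    [CompleteSpace X] (b : ℝ) (hb : 0 < b) (τ : Measure ℝ) [IsFiniteMeasure τ]
    (hτ : IntegrableOn (fun t : ℝ => 1 / t) (Ioc 0 b) τ)
    (MA : ℝ) (hMA : 0 < MA) (A : X →L[ℂ] X) (hA : MemV b MA A) :
    ∀ x : X, ‖x‖ = 1 →
      ‖fOp τ b A x‖ ≤ (2 * MA + 1) * (∫ t in Ioc (0 : ℝ) b, 1 / t ∂τ) * ‖A x‖ := by
  intro x _
  have integral_one_div_nonneg : 0 ≤ ∫ t in Ioc (0 : ℝ) b, 1 / t ∂τ :=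
    setIntegral_nonneg measurableSet_Ioc fun t ht => one_div_nonneg.2 ht.1.le
  exact (moment_inequality_linear_general hA hτ x).trans (by gcongr; linarith)
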